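/- arXiv:2211.01851 — 8 statements merged into one kernel-verified Lean document; each statement's English description precedes it below -/
import Mathlib

section
/- For all x, y, g ∈ ℝ^d, (1/n)·∑_{i=1}^n ‖∇f_i(x) − ∇f_i(y) + g − ∇f(x)‖² ≤ L²‖x − y‖² + ‖g − ∇f(y)‖². -/
open MeasureTheory ProbabilityTheory Finset Real

/-!
Put `vᵢ = ∇fᵢ(x) - ∇fᵢ(y)`, with mean `v = ∇F(x) - ∇F(y)` by linearity of the gradient, and
`c = g - ∇F(y)`. The vectors on the left are `(vᵢ - v) + c`, and the deviations `vᵢ - v` have mean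
zero, so the mean of the squared norms equals the variance of `vᵢ` plus `‖c‖ ^ 2`
(`mean_norm_sq_add`). The variance is at most the mean of `‖vᵢ‖ ^ 2`, which the Lipschitz
hypothesis bounds by `L ^ 2 * ‖x - y‖ ^ 2`.
-/

lemma gradient_mean {n : ℕ} {E : Type*} [NormedAddCommGroup E] [InnerProductSpace ℝ E]
    [CompleteSpace E] {f : Fin n → E → ℝ} (hdiff : ∀ i, Differentiable ℝ (f i))
    {F : E → ℝ} (hF : ∀ z, F z = (n : ℝ)⁻¹ * ∑ i, f i z) (z : E) :
    gradient F z = (n : ℝ)⁻¹ • ∑ i, gradient (f i) z := by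
  apply HasGradientAt.gradient
  rw [hasGradientAt_iff_hasFDerivAt, map_smul, map_sum]
  have h : HasFDerivAt (fun z => (n : ℝ)⁻¹ * ∑ i, f i z)
      ((n : ℝ)⁻¹ • ∑ i, (InnerProductSpace.toDual ℝ E) (gradient (f i) z)) z :=
    (HasFDerivAt.fun_sum fun i _ =>
      (hdiff i z).hasGradientAt.hasFDerivAt).const_mul _
  rwa [← funext hF] at h

/-- The bias–variance decomposition: the mean of `‖uᵢ + c - v‖ ^ 2`, where `v` is the mean of the
`uᵢ`, with the variance written as the mean of squares minus the square of the mean. -/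
lemma mean_norm_sq_add {n : ℕ} (hn : 1 ≤ n) {E : Type*} [NormedAddCommGroup E]
    [InnerProductSpace ℝ E] (u : Fin n → E) (v c : E) (hv : v = (n : ℝ)⁻¹ • ∑ i, u i) :
    (n : ℝ)⁻¹ * ∑ i, ‖u i + (c - v)‖ ^ 2 =
      (n : ℝ)⁻¹ * ∑ i, ‖u i‖ ^ 2 - ‖v‖ ^ 2 + ‖c‖ ^ 2 := by
  have hn0 : (n : ℝ) ≠ 0 := by positivity
  have hs : ∑ i, inner ℝ (u i) (c - v) = n * inner ℝ v (c - v) := by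
    rw [← sum_inner, hv, real_inner_smul_left, mul_inv_cancel_left₀ hn0]
  have hc : ‖c‖ ^ 2 = ‖v‖ ^ 2 + 2 * inner ℝ v (c - v) + ‖c - v‖ ^ 2 := by
    rw [← norm_add_sq_real, add_sub_cancel]
  simp_rw [norm_add_sq_real, sum_add_distrib, ← mul_sum, hs, hc, sum_const, card_univ,
    Fintype.card_fin, nsmul_eq_mul]
  field_simp
  ring

/-- Lemma `l:var_red`: variance-reduction inequality. -/
theorem var_red
    (n d : ℕ) (hn : 1 ≤ n) (hd : 1 ≤ d)
    (L : ℝ) (hL : 0 < L)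
    (f : Fin n → EuclideanSpace ℝ (Fin d) → ℝ)
    (hdiff : ∀ i, Differentiable ℝ (f i))
    (hlip : ∀ i x y, ‖gradient (f i) x - gradient (f i) y‖ ≤ L * ‖x - y‖)
    (F : EuclideanSpace ℝ (Fin d) → ℝ)
    (hF : ∀ z, F z = (n : ℝ)⁻¹ * ∑ i, f i z)
    (x y g : EuclideanSpace ℝ (Fin d)) :
    (n : ℝ)⁻¹ * ∑ i, ‖gradient (f i) x - gradient (f i) y + g - gradient F x‖ ^ 2 ≤
      L ^ 2 * ‖x - y‖ ^ 2 + ‖g - gradient F y‖ ^ 2 := by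
  have hn0 : (0 : ℝ) < n := by positivity
  have hv : gradient F x - gradient F y =
      (n : ℝ)⁻¹ • ∑ i, (gradient (f i) x - gradient (f i) y) := by
    rw [gradient_mean hdiff hF, gradient_mean hdiff hF, sum_sub_distrib, smul_sub]
  have key := mean_norm_sq_add hn _ _ (g - gradient F y) hv
  rw [sub_sub_sub_cancel_right] at key
  simp_rw [add_sub_assoc, key]
  have hb : (n : ℝ)⁻¹ * ∑ i, ‖gradient (f i) x - gradient (f i) y‖ ^ 2 ≤
      L ^ 2 * ‖x - y‖ ^ 2 := by
    rw [inv_mul_le_iff₀ hn0]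
    calc ∑ i, ‖gradient (f i) x - gradient (f i) y‖ ^ 2
        ≤ ∑ _i : Fin n, (L * ‖x - y‖) ^ 2 := by
          gcongr with i
          exact hlip i x y
      _ = n * (L ^ 2 * ‖x - y‖ ^ 2) := by simp [mul_pow]
  linarith [sq_nonneg ‖gradient F x - gradient F y‖]
end

section
/- For every T ≥ 1, the iterates of the AdaSpider trajectory satisfy ∑_{t=0}^{T−1} ‖∇_t‖² ≤ (2L²n²/β₀²)·T + (2L²/β₀²)·T³ + (4L/β₀)·T²·‖∇f(x₀)‖ + 2T·‖∇f(x₀)‖². -/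
/-!
Since `‖∇_t‖²` is one of the terms under the square root defining `γ_t`, every step has length
`‖x_{t+1} - x_t‖ ≤ 1/β₀`. The gradient of the average `F` is `L`-Lipschitz, and the estimator is
either reset to `∇F(x_t)` or changed by a difference of `∇f_i` at consecutive iterates. Hence both
`‖∇F(x_t)‖` and `‖∇_t‖` grow by at most `L/β₀` per step from `‖∇F(x₀)‖`, so that
`‖∇_t‖ ≤ ‖∇F(x₀)‖ + (L/β₀) t`. Squaring and bounding `t ≤ T` gives a sum of at most
`T (‖∇F(x₀)‖ + L T/β₀)²`, and each term of its expansion is dominated by one of the claimed bound.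
-/

open MeasureTheory ProbabilityTheory Finset Real

theorem gradient_average_lipschitz {n d : ℕ} (hn : 1 ≤ n) {L : ℝ}
    {f : Fin n → EuclideanSpace ℝ (Fin d) → ℝ}
    (hdiff : ∀ i, Differentiable ℝ (f i))
    (hlip : ∀ i x y, ‖gradient (f i) x - gradient (f i) y‖ ≤ L * ‖x - y‖)
    {F : EuclideanSpace ℝ (Fin d) → ℝ}
    (hF : ∀ z, F z = (n : ℝ)⁻¹ * ∑ i, f i z) (x y : EuclideanSpace ℝ (Fin d)) :
    ‖gradient F x - gradient F y‖ ≤ L * ‖x - y‖ := by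
  have hn0 : (0 : ℝ) < n := by exact_mod_cast hn
  have hgrad : ∀ z, gradient F z = (n : ℝ)⁻¹ • ∑ i, gradient (f i) z := by
    intro z
    have h : HasFDerivAt F ((n : ℝ)⁻¹ • ∑ i, fderiv ℝ (f i) z) z := by
      rw [funext hF]
      exact (HasFDerivAt.fun_sum fun i _ => (hdiff i z).hasFDerivAt).const_mul _
    simp only [gradient, h.fderiv, map_smulₛₗ, map_sum]
    simp
  rw [hgrad, hgrad, ← smul_sub, ← Finset.sum_sub_distrib, norm_smul, norm_inv, Real.norm_natCast]
  have hsum : ‖∑ i, (gradient (f i) x - gradient (f i) y)‖ ≤ n * (L * ‖x - y‖) := by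
    refine (norm_sum_le_of_le _ fun i _ => hlip i x y).trans ?_
    simp
  rwa [inv_mul_le_iff₀ hn0]

/-- An AdaGrad-type step is short: the normalizer dominates `β * √S ≥ β * a`, where `a` is the
norm of the current direction. -/
theorem adaptive_step_le {c β S a : ℝ} (hc : 1 ≤ c) (hβ : 0 < β)
    (hS0 : 0 < S) (hS : a ^ 2 ≤ S) :
    1 / (c * β * Real.sqrt S) * a ≤ 1 / β := by
  have hs : 0 < Real.sqrt S := Real.sqrt_pos.mpr hS0
  have has : a ≤ Real.sqrt S := Real.le_sqrt_of_sq_le hS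
  rw [div_mul_eq_mul_div, one_mul, div_le_div_iff₀ (by positivity) hβ]
  have h1 : a * β ≤ Real.sqrt S * β := by gcongr
  have h2 : 1 * (β * Real.sqrt S) ≤ c * (β * Real.sqrt S) := by gcongr
  linarith

/-- Lemma `l:bound_traj`: bound on the cumulative squared estimator norms. -/
theorem bound_traj
    (n d : ℕ) (hn : 1 ≤ n) (hd : 1 ≤ d)
    (L : ℝ) (hL : 0 < L)
    (f : Fin n → EuclideanSpace ℝ (Fin d) → ℝ)
    (hdiff : ∀ i, Differentiable ℝ (f i))
    (hlip : ∀ i x y, ‖gradient (f i) x - gradient (f i) y‖ ≤ L * ‖x - y‖)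
    (F : EuclideanSpace ℝ (Fin d) → ℝ)
    (hF : ∀ z, F z = (n : ℝ)⁻¹ * ∑ i, f i z)
    (idx : ℕ → Fin n)
    (β₀ G₀ : ℝ) (hβ : 0 < β₀) (hG : 0 < G₀)
    (x₀ : EuclideanSpace ℝ (Fin d))
    (x nab : ℕ → EuclideanSpace ℝ (Fin d)) (γ : ℕ → ℝ)
    (hx0 : x 0 = x₀)
    (hnab0 : nab 0 = gradient F (x 0))
    (hnab : ∀ t, nab (t + 1) =
      if (t + 1) % n = 0 then gradient F (x (t + 1))
      else gradient (f (idx (t + 1))) (x (t + 1))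
        - gradient (f (idx (t + 1))) (x t) + nab t)
    (hγ : ∀ t, γ t = 1 / ((n : ℝ) ^ ((1 : ℝ) / 4) * β₀ *
      Real.sqrt (Real.sqrt n * G₀ ^ 2 + ∑ s ∈ Finset.range (t + 1), ‖nab s‖ ^ 2)))
    (hstep : ∀ t, x (t + 1) = x t - γ t • nab t)
    (T : ℕ) (hT : 1 ≤ T) :
    ∑ t ∈ Finset.range T, ‖nab t‖ ^ 2 ≤
      (2 * L ^ 2 * n ^ 2 / β₀ ^ 2) * T + (2 * L ^ 2 / β₀ ^ 2) * (T : ℝ) ^ 3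
        + (4 * L / β₀) * (T : ℝ) ^ 2 * ‖gradient F x₀‖
        + 2 * T * ‖gradient F x₀‖ ^ 2 := by
  have hn0 : (1 : ℝ) ≤ n := by exact_mod_cast hn
  have hFlip := gradient_average_lipschitz hn hdiff hlip hF
  have hmove : ∀ t, L * ‖x (t + 1) - x t‖ ≤ L / β₀ := by
    intro t
    have hxt : ‖x (t + 1) - x t‖ = γ t * ‖nab t‖ := by
      have hγ0 : 0 ≤ γ t := by rw [hγ]; positivity
      rw [hstep, sub_sub_cancel_left, norm_neg, norm_smul, Real.norm_of_nonneg hγ0]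
    have hG' : 0 < Real.sqrt n * G₀ ^ 2 := by positivity
    have hsum : ‖nab t‖ ^ 2 ≤ ∑ s ∈ Finset.range (t + 1), ‖nab s‖ ^ 2 :=
      Finset.single_le_sum (f := fun s => ‖nab s‖ ^ 2) (fun s _ => sq_nonneg _)
        (Finset.self_mem_range_succ t)
    have hle : ‖x (t + 1) - x t‖ ≤ 1 / β₀ := by
      rw [hxt, hγ]
      exact adaptive_step_le (Real.one_le_rpow hn0 (by norm_num)) hβ
        (by nlinarith [sq_nonneg ‖nab t‖]) (by linarith)
    calc L * ‖x (t + 1) - x t‖ ≤ L * (1 / β₀) := by gcongr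
      _ = L / β₀ := by ring
  set g := ‖gradient F x₀‖ with hg
  have hg0 : 0 ≤ g := norm_nonneg _
  -- The true gradient is bounded alongside the estimator, because restarts reset the latter to it.
  have hgrowth : ∀ t : ℕ, ‖gradient F (x t)‖ ≤ g + L / β₀ * t ∧ ‖nab t‖ ≤ g + L / β₀ * t := by
    intro t
    induction t with
    | zero => simp [hnab0, hx0, hg]
    | succ t ih =>
      have hgr : ‖gradient F (x (t + 1))‖ ≤ g + L / β₀ * (t + 1 : ℕ) := by
        have h := norm_le_norm_add_norm_sub' (gradient F (x (t + 1))) (gradient F (x t))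
        have h' := hFlip (x (t + 1)) (x t)
        push_cast
        linarith [hmove t, ih.1]
      refine ⟨hgr, ?_⟩
      rw [hnab]
      split_ifs
      · exact hgr
      · refine (norm_add_le _ _).trans ?_
        have h' := hlip (idx (t + 1)) (x (t + 1)) (x t)
        push_cast
        linarith [hmove t, ih.2]
  have hterm : ∀ t ∈ Finset.range T, ‖nab t‖ ^ 2 ≤ (g + L / β₀ * T) ^ 2 := by
    intro t ht
    have htT : (t : ℝ) ≤ T := by exact_mod_cast (Finset.mem_range.mp ht).le
    have hle : ‖nab t‖ ≤ g + L / β₀ * T := (hgrowth t).2.trans (by gcongr)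
    gcongr
  have hbound := Finset.sum_le_card_nsmul _ _ _ hterm
  rw [Finset.card_range, nsmul_eq_mul] at hbound
  refine hbound.trans ?_
  rw [← sub_nonneg]
  have hdiff_eq : (2 * L ^ 2 * n ^ 2 / β₀ ^ 2) * T + (2 * L ^ 2 / β₀ ^ 2) * (T : ℝ) ^ 3
        + (4 * L / β₀) * (T : ℝ) ^ 2 * g + 2 * T * g ^ 2 - T * (g + L / β₀ * T) ^ 2
      = 2 * L ^ 2 * n ^ 2 / β₀ ^ 2 * T + L ^ 2 / β₀ ^ 2 * (T : ℝ) ^ 3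
        + 2 * L / β₀ * (T : ℝ) ^ 2 * g + T * g ^ 2 := by ring
  rw [hdiff_eq]
  positivity
end

section
/- Let a_1, …, a_T be nonnegative real numbers. Then √(∑_{t=1}^T a_t) ≤ ∑_{t=1}^T a_t / √(∑_{s=1}^t a_s), where any term with zero denominator is interpreted as zero. -/
open MeasureTheory ProbabilityTheory Finset Real

/-- Lemma `l:sqrt`. -/
theorem sqrt_sum_le_sum_div_sqrt
    (T : ℕ) (hT : 1 ≤ T) (a : ℕ → ℝ)
    (ha : ∀ t, 1 ≤ t → t ≤ T → 0 ≤ a t) :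
    Real.sqrt (∑ t ∈ Finset.Icc 1 T, a t) ≤
      ∑ t ∈ Finset.Icc 1 T, a t / Real.sqrt (∑ s ∈ Finset.Icc 1 t, a s) := by
  -- With `S` the full sum, `√S = S / √S = ∑ a t / √S`, and each partial sum is at most `S`.
  rw [← Real.div_sqrt, Finset.sum_div]
  refine Finset.sum_le_sum fun t ht => ?_
  obtain ⟨h1, hT'⟩ := Finset.mem_Icc.mp ht
  -- A zero denominator on the right forces `a t = 0`, so only `0 < a t` needs monotonicity.
  rcases (ha t h1 hT').eq_or_lt with h0 | h_pos
  · simp [← h0]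
  have h_le : a t ≤ ∑ s ∈ Finset.Icc 1 t, a s :=
    Finset.single_le_sum (f := a)
      (fun s hs => ha s (Finset.mem_Icc.mp hs).1 ((Finset.mem_Icc.mp hs).2.trans hT'))
      (Finset.mem_Icc.mpr ⟨h1, le_rfl⟩)
  have h_mono : ∑ s ∈ Finset.Icc 1 t, a s ≤ ∑ s ∈ Finset.Icc 1 T, a s :=
    Finset.sum_le_sum_of_subset_of_nonneg (Finset.Icc_subset_Icc_right hT')
      fun s hs _ => ha s (Finset.mem_Icc.mp hs).1 (Finset.mem_Icc.mp hs).2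
  exact div_le_div_of_nonneg_left h_pos.le (Real.sqrt_pos.mpr (h_pos.trans_le h_le))
    (Real.sqrt_le_sqrt h_mono)
end

section
/- Let a_1, …, a_T be nonnegative real numbers. Then ∑_{t=1}^T a_t / (1 + ∑_{s=1}^t a_s) ≤ log(1 + ∑_{t=1}^T a_t). -/
open MeasureTheory ProbabilityTheory Finset Real

/-! Put `S = 1 + ∑_{s ≤ n} a_s` and `x = a_{n+1}`. The inequality `1 - y⁻¹ ≤ log y` at `y = (S + x) / S`
reads `x / (S + x) ≤ log (S + x) - log S`, so the sum is bounded by a telescoping sum of logarithms. -/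

/-- Lemma `l:log`. -/
theorem sum_div_one_add_sum_le_log
    (T : ℕ) (hT : 1 ≤ T) (a : ℕ → ℝ)
    (ha : ∀ t, 1 ≤ t → t ≤ T → 0 ≤ a t) :
    ∑ t ∈ Finset.Icc 1 T, a t / (1 + ∑ s ∈ Finset.Icc 1 t, a s) ≤
      Real.log (1 + ∑ t ∈ Finset.Icc 1 T, a t) := by
  clear hT
  induction T with
  | zero => simp
  | succ n ih =>
    have ih' := ih fun t h1 h2 => ha t h1 (by omega)
    have hS : 0 ≤ ∑ s ∈ Finset.Icc 1 n, a s :=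
      Finset.sum_nonneg fun t ht => by
        rw [Finset.mem_Icc] at ht
        exact ha t ht.1 (by omega)
    have hx : 0 ≤ a (n + 1) := ha (n + 1) (by omega) le_rfl
    rw [Finset.sum_Icc_succ_top (by omega), Finset.sum_Icc_succ_top (by omega)]
    set S := ∑ s ∈ Finset.Icc 1 n, a s
    set x := a (n + 1)
    have hS1 : 0 < 1 + S := by linarith
    have hSx : 0 < 1 + (S + x) := by linarith
    have key := Real.one_sub_inv_le_log_of_pos (div_pos hSx hS1)
    rw [Real.log_div hSx.ne' hS1.ne'] at key
    have heq : 1 - ((1 + (S + x)) / (1 + S))⁻¹ = x / (1 + (S + x)) := by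
      field_simp
      ring
    linarith
end

section
/- For every t ≥ 0, the AdaSpider trajectory satisfies ‖∇_t‖² ≤ 2L²n²/β₀² + 2‖∇f(x_{t − (t mod n)})‖². -/
/-!
Since the step size satisfies `γ_s ‖∇_s‖ ≤ 1 / β₀` (the square root in its denominator dominates
`‖∇_s‖`, and `n ^ (1/4) ≥ 1`), consecutive iterates are at distance at most `1 / β₀`. By Lipschitz
continuity, each recursive update then changes the estimator norm by at most `L / β₀`. An induction
from the last full-gradient index `t - t % n` gives
`‖∇_t‖ ≤ ‖∇F(x_{t - t % n})‖ + (t % n) * (L / β₀)`, and `(a + b)² ≤ 2a² + 2b²` with `t % n ≤ n`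
concludes.
-/

/-- The adaptive step length is at most `1 / β`; this holds whatever the sum of squares is, because
its last term is `‖v t‖ ^ 2`. -/
lemma adaptive_step_norm_le {E : Type*} [SeminormedAddCommGroup E] {n : ℕ} (hn : 1 ≤ n)
    {β G : ℝ} (hβ : 0 < β) (hG : 0 < G) (v : ℕ → E) (t : ℕ) :
    1 / ((n : ℝ) ^ ((1 : ℝ) / 4) * β *
      Real.sqrt (Real.sqrt n * G ^ 2 + ∑ s ∈ Finset.range (t + 1), ‖v s‖ ^ 2)) * ‖v t‖
      ≤ 1 / β := by
  have hn' : (1 : ℝ) ≤ n := by exact_mod_cast hn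
  have hpow : (1 : ℝ) ≤ (n : ℝ) ^ ((1 : ℝ) / 4) := Real.one_le_rpow hn' (by norm_num)
  have hpos : 0 < Real.sqrt n * G ^ 2 := by positivity
  have hsum : ‖v t‖ ^ 2 ≤ ∑ s ∈ Finset.range (t + 1), ‖v s‖ ^ 2 :=
    Finset.single_le_sum (f := fun s => ‖v s‖ ^ 2) (fun _ _ => by positivity)
      (Finset.self_mem_range_succ t)
  set S := Real.sqrt n * G ^ 2 + ∑ s ∈ Finset.range (t + 1), ‖v s‖ ^ 2
  have hS : 0 < Real.sqrt S := Real.sqrt_pos.mpr (by nlinarith [sq_nonneg ‖v t‖])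
  have hle : ‖v t‖ ≤ Real.sqrt S := Real.le_sqrt_of_sq_le (by linarith)
  have hden : ‖v t‖ * β ≤ (n : ℝ) ^ ((1 : ℝ) / 4) * β * Real.sqrt S :=
    calc ‖v t‖ * β ≤ Real.sqrt S * β := by gcongr
      _ = 1 * β * Real.sqrt S := by ring
      _ ≤ _ := by gcongr
  rw [one_div_mul_eq_div, div_le_div_iff₀ (by positivity) hβ]
  linarith

lemma succ_mod_eq_of_ne_zero {n t : ℕ} (hn : 1 ≤ n) (h : (t + 1) % n ≠ 0) :
    (t + 1) % n = t % n + 1 := by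
  have hlt : t % n < n := Nat.mod_lt _ hn
  rw [← Nat.mod_add_mod] at h ⊢
  rcases Nat.lt_or_ge (t % n + 1) n with h1 | h1
  · exact Nat.mod_eq_of_lt h1
  · have h2 : t % n + 1 = n := by omega
    rw [h2, Nat.mod_self] at h
    exact absurd rfl h

open MeasureTheory ProbabilityTheory Finset Real

/-- Per-iterate bound of the estimator norm along the AdaSpider trajectory. -/
theorem adaspider_nab_sq_bound
    (n d : ℕ) (hn : 1 ≤ n) (hd : 1 ≤ d)
    (L : ℝ) (hL : 0 < L)
    (f : Fin n → EuclideanSpace ℝ (Fin d) → ℝ)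
    (hdiff : ∀ i, Differentiable ℝ (f i))
    (hlip : ∀ i x y, ‖gradient (f i) x - gradient (f i) y‖ ≤ L * ‖x - y‖)
    (F : EuclideanSpace ℝ (Fin d) → ℝ)
    (hF : ∀ z, F z = (n : ℝ)⁻¹ * ∑ i, f i z)
    (idx : ℕ → Fin n)
    (β₀ G₀ : ℝ) (hβ : 0 < β₀) (hG : 0 < G₀)
    (x₀ : EuclideanSpace ℝ (Fin d))
    (x nab : ℕ → EuclideanSpace ℝ (Fin d)) (γ : ℕ → ℝ)
    (hx0 : x 0 = x₀)
    (hnab0 : nab 0 = gradient F (x 0))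
    (hnab : ∀ t, nab (t + 1) =
      if (t + 1) % n = 0 then gradient F (x (t + 1))
      else gradient (f (idx (t + 1))) (x (t + 1))
        - gradient (f (idx (t + 1))) (x t) + nab t)
    (hγ : ∀ t, γ t = 1 / ((n : ℝ) ^ ((1 : ℝ) / 4) * β₀ *
      Real.sqrt (Real.sqrt n * G₀ ^ 2 + ∑ s ∈ Finset.range (t + 1), ‖nab s‖ ^ 2)))
    (hstep : ∀ t, x (t + 1) = x t - γ t • nab t)
    (t : ℕ) :
    ‖nab t‖ ^ 2 ≤ 2 * L ^ 2 * n ^ 2 / β₀ ^ 2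
      + 2 * ‖gradient F (x (t - t % n))‖ ^ 2 := by
  have hmove : ∀ s, ‖x (s + 1) - x s‖ ≤ 1 / β₀ := by
    intro s
    have hγ0 : 0 ≤ γ s := by rw [hγ]; positivity
    have hx : x (s + 1) - x s = -(γ s • nab s) := by rw [hstep]; abel
    rw [hx, norm_neg, norm_smul, Real.norm_of_nonneg hγ0, hγ]
    exact adaptive_step_norm_le hn hβ hG nab s
  have key : ∀ s, ‖nab s‖ ≤ ‖gradient F (x (s - s % n))‖ + (s % n : ℕ) * (L / β₀) := by
    intro s
    induction s with
    | zero => simp [hnab0]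
    | succ s ih =>
      rw [hnab]
      split_ifs with h
      · simp [h]
      · have hmod := succ_mod_eq_of_ne_zero hn h
        -- within an epoch the index of the last full gradient does not change
        have hidx : s + 1 - (s % n + 1) = s - s % n := by omega
        rw [hmod, hidx]
        have h1 : ‖gradient (f (idx (s + 1))) (x (s + 1)) - gradient (f (idx (s + 1))) (x s)‖
            ≤ L / β₀ :=
          calc _ ≤ L * ‖x (s + 1) - x s‖ := hlip _ _ _
            _ ≤ L * (1 / β₀) := by gcongr; exact hmove s
            _ = L / β₀ := by ring
        refine (norm_add_le _ _).trans ?_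
        push_cast
        linarith
  have hr : ((t % n : ℕ) : ℝ) ≤ n := by exact_mod_cast (Nat.mod_lt t hn).le
  have hb : ‖nab t‖ ≤ ‖gradient F (x (t - t % n))‖ + n * (L / β₀) :=
    (key t).trans (by gcongr)
  calc ‖nab t‖ ^ 2 ≤ (‖gradient F (x (t - t % n))‖ + n * (L / β₀)) ^ 2 := by gcongr
    _ ≤ 2 * (‖gradient F (x (t - t % n))‖ ^ 2 + (n * (L / β₀)) ^ 2) := add_sq_le
    _ = _ := by ring
end

section
/- Let f : ℝ^d → ℝ be differentiable with L-Lipschitz gradient and bounded below by f*. Let γ_0, …, γ_{T−1} ≥ 0 and g_0, …, g_{T−1} ∈ ℝ^d, and define x_{t+1} = x_t − γ_t·g_t starting from x_0 ∈ ℝ^d. Then ∑_{t=0}^{T−1} γ_t·‖g_t‖² ≤ 2·(f(x₀) − f*) + L·∑_{t=0}^{T−1} γ_t²·‖g_t‖² + ∑_{t=0}^{T−1} γ_t·‖∇f(x_t) − g_t‖². -/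
/-!
By Taylor's inequality for a function with `L`-Lipschitz gradient, one step `x ↦ x - γ g` satisfies
`f (x - γ g) ≤ f x - γ ⟪∇f x, g⟫ + (L / 2) γ² ‖g‖²`. Polarization,
`-2 ⟪∇f x, g⟫ = ‖∇f x - g‖² - ‖∇f x‖² - ‖g‖²`, leaves the nonpositive term `-γ ‖∇f x‖²`, which can be dropped, so
`γ ‖g‖² ≤ 2 (f x - f (x - γ g)) + L γ² ‖g‖² + γ ‖∇f x - g‖²`.
Summing over the steps telescopes the function values, and the last one is at least `fstar`.
-/

/-- Descent lemma: the quadratic upper bound for a function with `L`-Lipschitz gradient. -/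
lemma le_quadratic_of_lipschitz_gradient {E : Type*} [NormedAddCommGroup E]
    [InnerProductSpace ℝ E] [CompleteSpace E] {f : E → ℝ} {L : ℝ}
    (hdiff : Differentiable ℝ f)
    (hlip : ∀ x y, ‖gradient f x - gradient f y‖ ≤ L * ‖x - y‖) (x v : E) :
    f (x + v) ≤ f x + inner ℝ (gradient f x) v + L / 2 * ‖v‖ ^ 2 := by
  have hline : ∀ s : ℝ, HasDerivAt (fun s : ℝ => f (x + s • v))
      (inner ℝ (gradient f (x + s • v)) v) s := by
    intro s
    have h := (hdiff (x + s • v)).hasGradientAt.hasFDerivAt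
    have hv : HasDerivAt (fun s : ℝ => x + s • v) v s := by
      simpa using ((hasDerivAt_id s).smul_const v).const_add x
    exact h.comp_hasDerivAt s hv
  have hquad : ∀ s : ℝ, HasDerivAt
      (fun s : ℝ => f x + s * inner ℝ (gradient f x) v + L / 2 * ‖v‖ ^ 2 * s ^ 2)
      (inner ℝ (gradient f x) v + L * ‖v‖ ^ 2 * s) s := by
    intro s
    refine HasDerivAt.congr_deriv ((((hasDerivAt_id s).mul_const (inner ℝ (gradient f x) v)).const_add (f x)).add
      (((hasDerivAt_id s).pow 2).const_mul (L / 2 * ‖v‖ ^ 2))) ?_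
    simp
    ring
  -- Compare `s ↦ f (x + s v)` with its quadratic majorant on `[0, 1]` through their derivatives.
  have key := image_le_of_deriv_right_le_deriv_boundary (a := 0) (b := 1)
    (fun s _ => (hline s).continuousAt.continuousWithinAt)
    (fun s _ => (hline s).hasDerivWithinAt) (by simp)
    (fun s _ => (hquad s).continuousAt.continuousWithinAt)
    (fun s _ => (hquad s).hasDerivWithinAt)
    (fun s hs => by
      have h1 := real_inner_le_norm (gradient f (x + s • v) - gradient f x) v
      have h2 := hlip (x + s • v) x
      rw [add_sub_cancel_left, norm_smul, Real.norm_of_nonneg hs.1] at h2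
      have h3 := mul_le_mul_of_nonneg_right h2 (norm_nonneg v)
      rw [inner_sub_left] at h1
      linarith)
    (Set.right_mem_Icc.2 zero_le_one)
  simpa using key

/-- One-step inequality, whose sum over the steps telescopes. -/
lemma gradient_step_le {E : Type*} [NormedAddCommGroup E]
    [InnerProductSpace ℝ E] [CompleteSpace E] {f : E → ℝ} {L : ℝ}
    (hdiff : Differentiable ℝ f)
    (hlip : ∀ x y, ‖gradient f x - gradient f y‖ ≤ L * ‖x - y‖) (x g : E) {c : ℝ} (hc : 0 ≤ c) :
    c * ‖g‖ ^ 2 ≤ 2 * (f x - f (x - c • g)) + L * (c ^ 2 * ‖g‖ ^ 2)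
      + c * ‖gradient f x - g‖ ^ 2 := by
  have h := le_quadratic_of_lipschitz_gradient hdiff hlip x (-(c • g))
  rw [← sub_eq_add_neg, inner_neg_right, inner_smul_right, norm_neg, norm_smul, mul_pow,
    Real.norm_eq_abs, sq_abs] at h
  have hpol := norm_sub_sq_real (gradient f x) g
  have hdrop := mul_nonneg hc (sq_nonneg ‖gradient f x‖)
  rw [hpol]
  linarith


open MeasureTheory ProbabilityTheory Finset Real

/-- Telescoped descent inequality. -/
theorem telescoped_descent
    (d T : ℕ) (hd : 1 ≤ d) (hT : 1 ≤ T)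
    (L : ℝ) (hL : 0 < L)
    (f : EuclideanSpace ℝ (Fin d) → ℝ)
    (hdiff : Differentiable ℝ f)
    (hlip : ∀ x y, ‖gradient f x - gradient f y‖ ≤ L * ‖x - y‖)
    (fstar : ℝ) (hfstar : ∀ z, fstar ≤ f z)
    (γ : ℕ → ℝ) (g : ℕ → EuclideanSpace ℝ (Fin d)) (x : ℕ → EuclideanSpace ℝ (Fin d)) (x₀ : EuclideanSpace ℝ (Fin d))
    (hγ : ∀ t, t < T → 0 ≤ γ t)
    (hx0 : x 0 = x₀)
    (hstep : ∀ t, t < T → x (t + 1) = x t - γ t • g t) :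
    ∑ t ∈ Finset.range T, γ t * ‖g t‖ ^ 2 ≤
      2 * (f x₀ - fstar) + L * ∑ t ∈ Finset.range T, (γ t) ^ 2 * ‖g t‖ ^ 2
        + ∑ t ∈ Finset.range T, γ t * ‖gradient f (x t) - g t‖ ^ 2 := by
  have hsum : ∑ t ∈ Finset.range T, γ t * ‖g t‖ ^ 2 ≤
      ∑ t ∈ Finset.range T, (2 * (f (x t) - f (x (t + 1))) + L * ((γ t) ^ 2 * ‖g t‖ ^ 2)
        + γ t * ‖gradient f (x t) - g t‖ ^ 2) := by
    refine Finset.sum_le_sum fun t ht => ?_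
    have ht' := Finset.mem_range.1 ht
    rw [hstep t ht']
    exact gradient_step_le hdiff hlip (x t) (g t) (hγ t ht')
  rw [Finset.sum_add_distrib, Finset.sum_add_distrib, ← Finset.mul_sum, ← Finset.mul_sum,
    Finset.sum_range_sub' (fun t => f (x t)), hx0] at hsum
  linarith [hfstar (x T)]
end

section
/- For every T ≥ 1, the AdaSpider trajectory satisfies ∑_{t=0}^{T−1} γ_t³ · ‖∇_t‖² ≤ (1/(n·β₀³·G₀)) · log(1 + ∑_{t=0}^{T−1} ‖∇_t‖²/G₀²). -/
/-!
The bound only uses the formula for the step sizes, so it holds for an arbitrary nonnegative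
sequence in place of `‖nab t‖ ^ 2`. Write `m = n ^ (1/4)`, `A t` for the partial sum up to and
including `t`, and `S t = m ^ 2 * G₀ ^ 2 + A t`, so that `γ t = 1 / (m * β₀ * √(S t))`. Two of the
three factors `√(S t)` in `1 / γ t ^ 3` are kept and the third is bounded below by `m * G₀`, which
supplies the missing power of `m` in `m ^ 4 = n` (`cube_term_le`). Since `m ≥ 1`, what remains is
the increment divided by at least `G₀ ^ 2 + A t`, and this is at most the increment of
`log (1 + A / G₀ ^ 2)` by `1 - 1 / y ≤ log y` (`div_le_log_sub_log`); the sum telescopes.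
-/

open MeasureTheory ProbabilityTheory Finset Real

/-- One step of the telescoping: the logarithmic increment dominates `a / (G ^ 2 + P + a)`. -/
lemma div_le_log_sub_log {G P a : ℝ} (hG : 0 < G) (hP : 0 ≤ P) (ha : 0 ≤ a) :
    a / (G ^ 2 + (P + a)) ≤
      Real.log (1 + (P + a) / G ^ 2) - Real.log (1 + P / G ^ 2) := by
  have hu : 0 < 1 + P / G ^ 2 := by positivity
  have hv : 0 < 1 + (P + a) / G ^ 2 := by positivity
  have h := Real.one_sub_inv_le_log_of_pos (div_pos hv hu)
  rw [Real.log_div hv.ne' hu.ne'] at h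
  refine le_trans (le_of_eq ?_) h
  have h1 : G ^ 2 + (P + a) ≠ 0 := by positivity
  have h2 : G ^ 2 + P ≠ 0 := by positivity
  field_simp
  ring

/-- The cubed step size, with `m` playing the role of `n ^ (1/4)`. -/
lemma cube_term_le {m β G A a : ℝ} (hm : 1 ≤ m) (hβ : 0 < β) (hG : 0 < G) (hA : 0 ≤ A)
    (ha : 0 ≤ a) :
    (1 / (m * β * Real.sqrt (m ^ 2 * G ^ 2 + A))) ^ 3 * a ≤
      1 / (m ^ 4 * β ^ 3 * G) * (a / (G ^ 2 + A)) := by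
  have hm0 : 0 < m := by linarith
  set r := Real.sqrt (m ^ 2 * G ^ 2 + A) with hr
  have hr2 : r ^ 2 = m ^ 2 * G ^ 2 + A := Real.sq_sqrt (by positivity)
  have hrm : m * G ≤ r := Real.le_sqrt_of_sq_le (by nlinarith)
  have hS : G ^ 2 + A ≤ r ^ 2 := by
    rw [hr2]
    nlinarith [mul_le_mul_of_nonneg_right (one_le_pow₀ hm : 1 ≤ m ^ 2) (sq_nonneg G)]
  have hprod : m * G * (G ^ 2 + A) ≤ r * r ^ 2 := by gcongr
  have hden : m ^ 4 * β ^ 3 * G * (G ^ 2 + A) ≤ (m * β * r) ^ 3 :=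
    calc m ^ 4 * β ^ 3 * G * (G ^ 2 + A) = m ^ 3 * β ^ 3 * (m * G * (G ^ 2 + A)) := by ring
      _ ≤ m ^ 3 * β ^ 3 * (r * r ^ 2) := by gcongr
      _ = (m * β * r) ^ 3 := by ring
  calc (1 / (m * β * r)) ^ 3 * a = a / (m * β * r) ^ 3 := by rw [div_pow, one_pow]; ring
    _ ≤ a / (m ^ 4 * β ^ 3 * G * (G ^ 2 + A)) := by gcongr
    _ = 1 / (m ^ 4 * β ^ 3 * G) * (a / (G ^ 2 + A)) := by rw [div_mul_div_comm, one_mul]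

/-- Adaptive step-size bound: cubed weighted sums. -/
theorem adaspider_gamma_cube_sum
    (n d : ℕ) (hn : 1 ≤ n) (hd : 1 ≤ d)
    (f : Fin n → EuclideanSpace ℝ (Fin d) → ℝ)
    (hdiff : ∀ i, Differentiable ℝ (f i))
    (F : EuclideanSpace ℝ (Fin d) → ℝ)
    (hF : ∀ z, F z = (n : ℝ)⁻¹ * ∑ i, f i z)
    (idx : ℕ → Fin n)
    (β₀ G₀ : ℝ) (hβ : 0 < β₀) (hG : 0 < G₀)
    (x₀ : EuclideanSpace ℝ (Fin d))
    (x nab : ℕ → EuclideanSpace ℝ (Fin d)) (γ : ℕ → ℝ)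
    (hx0 : x 0 = x₀)
    (hnab0 : nab 0 = gradient F (x 0))
    (hnab : ∀ t, nab (t + 1) =
      if (t + 1) % n = 0 then gradient F (x (t + 1))
      else gradient (f (idx (t + 1))) (x (t + 1))
        - gradient (f (idx (t + 1))) (x t) + nab t)
    (hγ : ∀ t, γ t = 1 / ((n : ℝ) ^ ((1 : ℝ) / 4) * β₀ *
      Real.sqrt (Real.sqrt n * G₀ ^ 2 + ∑ s ∈ Finset.range (t + 1), ‖nab s‖ ^ 2)))
    (hstep : ∀ t, x (t + 1) = x t - γ t • nab t)
    (T : ℕ) (hT : 1 ≤ T) :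
    ∑ t ∈ Finset.range T, (γ t) ^ 3 * ‖nab t‖ ^ 2 ≤
      (1 / (n * β₀ ^ 3 * G₀)) *
        Real.log (1 + (∑ t ∈ Finset.range T, ‖nab t‖ ^ 2) / G₀ ^ 2) := by
  set m : ℝ := (n : ℝ) ^ ((1 : ℝ) / 4) with hm
  have hn1 : (1 : ℝ) ≤ n := by exact_mod_cast hn
  have hm1 : 1 ≤ m := Real.one_le_rpow hn1 (by norm_num)
  have hm4 : m ^ 4 = n := by
    rw [hm, ← Real.rpow_natCast, ← Real.rpow_mul (by positivity)]
    norm_num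
  have hm2 : Real.sqrt n = m ^ 2 := by
    rw [← hm4, show m ^ 4 = (m ^ 2) ^ 2 by ring, Real.sqrt_sq (by positivity)]
  clear hT
  induction T with
  | zero => simp
  | succ T ih =>
    have hP : 0 ≤ ∑ t ∈ Finset.range T, ‖nab t‖ ^ 2 := Finset.sum_nonneg fun _ _ => sq_nonneg _
    have hlog := div_le_log_sub_log hG hP (sq_nonneg ‖nab T‖)
    have hterm := cube_term_le hm1 hβ hG (add_nonneg hP (sq_nonneg ‖nab T‖)) (sq_nonneg ‖nab T‖)
    have hc : 0 ≤ 1 / ((n : ℝ) * β₀ ^ 3 * G₀) := by positivity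
    have hmul := mul_le_mul_of_nonneg_left hlog hc
    rw [hm4] at hterm
    rw [Finset.sum_range_succ, Finset.sum_range_succ _ T, hγ T, hm2, Finset.sum_range_succ _ T]
    linarith
end

section
/- For every T ≥ 1, the AdaSpider trajectory satisfies ∑_{t=0}^{T−1} γ_t · ‖∇_t‖² ≥ (G₀/β₀) · ( √( (∑_{t=0}^{T−1} ‖∇_t‖²) / (√n·G₀²) ) − 1 ). -/
/-!
Since `b - a = (√b - √a) (√b + √a) ≥ (√b - √a) √b` for `0 ≤ a ≤ b`, each term `‖∇_t‖² / √(B + S_{t+1})`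
dominates the increment `√(B + S_{t+1}) - √(B + S_t)`, where `S_t = ∑_{s<t} ‖∇_s‖²` and `B = √n G₀²`.
Telescoping gives `∑ ‖∇_t‖² / √(B + S_{t+1}) ≥ √(B + S_T) - √B ≥ √S_T - √B`, and dividing by
`n^{1/4} β₀` with `√B = n^{1/4} G₀` yields the bound.
-/

open MeasureTheory ProbabilityTheory Finset Real

/-- Telescoping bound for AdaGrad-type sums; it holds for any nonnegative sequence `a`. -/
lemma sqrt_sub_sqrt_le_sum_div_sqrt (a : ℕ → ℝ) (ha : ∀ t, 0 ≤ a t) (B : ℝ) (hB : 0 < B) (T : ℕ) :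
    Real.sqrt (B + ∑ t ∈ Finset.range T, a t) - Real.sqrt B ≤
      ∑ t ∈ Finset.range T, a t / Real.sqrt (B + ∑ s ∈ Finset.range (t + 1), a s) := by
  induction T with
  | zero => simp
  | succ T ih =>
    rw [Finset.sum_range_succ (fun t => a t / _)]
    have hS : 0 ≤ ∑ t ∈ Finset.range T, a t := Finset.sum_nonneg fun t _ => ha t
    have key : Real.sqrt (B + ∑ s ∈ Finset.range (T + 1), a s)
        - Real.sqrt (B + ∑ s ∈ Finset.range T, a s)
        ≤ a T / Real.sqrt (B + ∑ s ∈ Finset.range (T + 1), a s) := by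
      rw [Finset.sum_range_succ]
      generalize ∑ s ∈ Finset.range T, a s = S at hS
      have h0 := ha T
      have hpos : 0 < Real.sqrt (B + (S + a T)) := Real.sqrt_pos.2 (by linarith)
      have hle : Real.sqrt (B + S) ≤ Real.sqrt (B + (S + a T)) :=
        Real.sqrt_le_sqrt (by linarith)
      rw [le_div_iff₀ hpos]
      nlinarith [Real.sq_sqrt (show 0 ≤ B + (S + a T) by linarith),
        Real.sq_sqrt (show 0 ≤ B + S by linarith), Real.sqrt_nonneg (B + S),
        mul_nonneg (Real.sqrt_nonneg (B + S)) (sub_nonneg.2 hle)]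
    linarith

/-- Lower bound on the weighted sum of squared estimator norms. -/
theorem adaspider_gamma_sum_lower
    (n d : ℕ) (hn : 1 ≤ n) (hd : 1 ≤ d)
    (f : Fin n → EuclideanSpace ℝ (Fin d) → ℝ)
    (hdiff : ∀ i, Differentiable ℝ (f i))
    (F : EuclideanSpace ℝ (Fin d) → ℝ)
    (hF : ∀ z, F z = (n : ℝ)⁻¹ * ∑ i, f i z)
    (idx : ℕ → Fin n)
    (β₀ G₀ : ℝ) (hβ : 0 < β₀) (hG : 0 < G₀)
    (x₀ : EuclideanSpace ℝ (Fin d))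
    (x nab : ℕ → EuclideanSpace ℝ (Fin d)) (γ : ℕ → ℝ)
    (hx0 : x 0 = x₀)
    (hnab0 : nab 0 = gradient F (x 0))
    (hnab : ∀ t, nab (t + 1) =
      if (t + 1) % n = 0 then gradient F (x (t + 1))
      else gradient (f (idx (t + 1))) (x (t + 1))
        - gradient (f (idx (t + 1))) (x t) + nab t)
    (hγ : ∀ t, γ t = 1 / ((n : ℝ) ^ ((1 : ℝ) / 4) * β₀ *
      Real.sqrt (Real.sqrt n * G₀ ^ 2 + ∑ s ∈ Finset.range (t + 1), ‖nab s‖ ^ 2)))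
    (hstep : ∀ t, x (t + 1) = x t - γ t • nab t)
    (T : ℕ) (hT : 1 ≤ T) :
    ∑ t ∈ Finset.range T, γ t * ‖nab t‖ ^ 2 ≥
      (G₀ / β₀) *
        (Real.sqrt ((∑ t ∈ Finset.range T, ‖nab t‖ ^ 2) / (Real.sqrt n * G₀ ^ 2)) - 1) := by
  have hn0 : (0 : ℝ) < n := by exact_mod_cast hn
  set c : ℝ := (n : ℝ) ^ ((1 : ℝ) / 4) with hc
  have hc0 : 0 < c := Real.rpow_pos_of_pos hn0 _
  have hcs : Real.sqrt n = c ^ 2 := by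
    rw [hc, Real.sqrt_eq_rpow, ← Real.rpow_natCast, ← Real.rpow_mul hn0.le]
    norm_num
  have hB : Real.sqrt n * G₀ ^ 2 = (c * G₀) ^ 2 := by rw [hcs]; ring
  have hcG : 0 < c * G₀ := mul_pos hc0 hG
  simp only [hB] at hγ ⊢
  have htel := sqrt_sub_sqrt_le_sum_div_sqrt (fun t => ‖nab t‖ ^ 2) (fun t => sq_nonneg _)
    ((c * G₀) ^ 2) (by positivity) T
  have hsum : ∑ t ∈ Finset.range T, γ t * ‖nab t‖ ^ 2 = (1 / (c * β₀)) *
      ∑ t ∈ Finset.range T,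
        ‖nab t‖ ^ 2 / Real.sqrt ((c * G₀) ^ 2 + ∑ s ∈ Finset.range (t + 1), ‖nab s‖ ^ 2) := by
    rw [Finset.mul_sum]
    refine Finset.sum_congr rfl fun t _ => ?_
    rw [hγ, one_div_mul_eq_div, div_mul_div_comm, one_mul]
  have hS : Real.sqrt (∑ t ∈ Finset.range T, ‖nab t‖ ^ 2) ≤
      Real.sqrt ((c * G₀) ^ 2 + ∑ t ∈ Finset.range T, ‖nab t‖ ^ 2) :=
    Real.sqrt_le_sqrt (by linarith [sq_nonneg (c * G₀)])
  rw [Real.sqrt_sq hcG.le] at htel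
  rw [Real.sqrt_div' _ (sq_nonneg _), Real.sqrt_sq hcG.le, hsum, ge_iff_le]
  calc G₀ / β₀ * (Real.sqrt (∑ t ∈ Finset.range T, ‖nab t‖ ^ 2) / (c * G₀) - 1)
      = 1 / (c * β₀) * (Real.sqrt (∑ t ∈ Finset.range T, ‖nab t‖ ^ 2) - c * G₀) := by
        field_simp
    _ ≤ _ := mul_le_mul_of_nonneg_left (by linarith) (by positivity)
end
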